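/- Let F(t_1,t_2) = (1/2)t_1²t_2 + e^{t_2} be the Frobenius manifold potential of the Gromov–Witten theory of ℙ¹ on ℂ², with metric η = ((0,1),(1,0)). Let φ be an analytic function on an open U ⊆ ℂ and set F^o(t_1,t_2,s) := t_1 s + e^{t_2/2} φ(s). Then F^o satisfies the open WDVV equations (with respect to F and η) if and only if φ'(s)² − φ(s)·φ''(s) = 4 for all s ∈ U. -/

import Mathlib

/-!
STATEMENT 18: For the Frobenius potential `F(t₁,t₂) = ½t₁²t₂ + e^{t₂}` of the
Gromov–Witten theory of ℙ¹ (metric η = ((0,1),(1,0))), and an analytic function φ on an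
open `U ⊆ ℂ`, the function `F^o(t₁,t₂,s) = t₁s + e^{t₂/2}φ(s)` satisfies the open WDVV
equations iff `φ'(s)² − φ(s)·φ''(s) = 4` for all `s ∈ U`.
-/

noncomputable section

abbrev Pt (n : ℕ) := Fin n → ℂ
abbrev Fn (n : ℕ) := (Fin n → ℂ) → ℂ

noncomputable def pd {n : ℕ} (i : Fin n) (f : Fn n) : Fn n :=
  fun x => fderiv ℂ f x (Pi.single i 1)

def prj {N : ℕ} (x : Pt (N + 1)) : Pt N := fun i => x i.castSucc

/-!
Both sides of the open WDVV system are explicit. The only non-vanishing third derivatives of `F` are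
`F₁₁₂ = 1` (up to order of indices) and `F₂₂₂ = e^{t₂}`, and the Hessian of `F^o` has entries
`F^o₁ₛ = 1`, `F^o₂₂ = e^{t₂/2}φ/4`, `F^o₂ₛ = e^{t₂/2}φ'/2`, `F^oₛₛ = e^{t₂/2}φ''`,
`F^o₁₁ = F^o₁₂ = 0`. With these values every equation holds identically except the second one
with `α = β = 2`, which reads `e^{t₂}(1 + φφ''/4) = e^{t₂}(φ')²/4`; dividing by `e^{t₂}/4` gives the
ordinary differential equation.

To compute the iterated derivatives uniformly, `F` and `F^o` are placed in two finite-parameter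
families that are closed under partial differentiation: `closedFam` (lemmas `pd_zero_closedFam`,
`pd_one_closedFam`) and `openFam` (lemmas `pd_openFam`, `hess_openFam`).
-/

/-- The span of `t₁²t₂`, `t₁t₂`, `t₁²`, `t₁`, `t₂`, `1`, `e^{t₂}`: a space of functions on `ℂ²`
containing `F` and stable under partial derivatives. -/
def closedFam (a b c d e k g : ℂ) : Fn 2 :=
  fun x => a * (x 0 ^ 2 * x 1) + b * (x 0 * x 1) + c * x 0 ^ 2 + d * x 0 + e * x 1 + k +
    g * Complex.exp (x 1)

/-- Functions `a t₁s + b t₁ + c s + k + d e^{t₂/2} ψ(s)` on `ℂ³`: a family containing `F^o` and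
stable under partial derivatives wherever `ψ` is analytic. -/
def openFam (a b c k d : ℂ) (ψ : ℂ → ℂ) : Fn 3 :=
  fun x => a * (x 0 * x 2) + b * x 0 + c * x 2 + k + d * (Complex.exp (x 1 / 2) * ψ (x 2))

lemma hasFDerivAt_coord {n : ℕ} (i : Fin n) (x : Pt n) :
    HasFDerivAt (fun y : Pt n => y i) (ContinuousLinearMap.proj (R := ℂ) i) x :=
  (ContinuousLinearMap.proj (R := ℂ) (φ := fun _ : Fin n => ℂ) i).hasFDerivAt

/-- Partial derivatives depend only on the germ of the function. -/
lemma pd_congr {n : ℕ} {f g : Fn n} {x : Pt n} (i : Fin n) (h : f =ᶠ[nhds x] g) :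
    pd i f x = pd i g x := by
  simp only [pd, h.fderiv_eq]

lemma pd_closedFam (a b c d e k g : ℂ) (x : Pt 2) :
    pd 0 (closedFam a b c d e k g) x = closedFam 0 (2 * a) 0 (2 * c) b d 0 x ∧
    pd 1 (closedFam a b c d e k g) x = closedFam 0 0 a b 0 e g x := by
  have h0 := hasFDerivAt_coord 0 x
  have h1 := hasFDerivAt_coord 1 x
  have h := ((((((((h0.pow 2).mul h1).const_mul a).add ((h0.mul h1).const_mul b)).add
    ((h0.pow 2).const_mul c)).add (h0.const_mul d)).add (h1.const_mul e)).add_const k).add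
    (h1.cexp.const_mul g)
  have h' : HasFDerivAt (closedFam a b c d e k g) _ x := h
  constructor <;> simp only [pd, h'.fderiv] <;> simp [closedFam] <;> ring

lemma pd_zero_closedFam (a b c d e k g : ℂ) :
    pd 0 (closedFam a b c d e k g) = closedFam 0 (2 * a) 0 (2 * c) b d 0 :=
  funext fun x => (pd_closedFam a b c d e k g x).1

lemma pd_one_closedFam (a b c d e k g : ℂ) :
    pd 1 (closedFam a b c d e k g) = closedFam 0 0 a b 0 e g :=
  funext fun x => (pd_closedFam a b c d e k g x).2

lemma pd_openFam (a b c k d : ℂ) {ψ : ℂ → ℂ} {x : Pt 3} (hψ : AnalyticAt ℂ ψ (x 2)) :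
    pd 0 (openFam a b c k d ψ) x = openFam 0 0 a b 0 ψ x ∧
    pd 1 (openFam a b c k d ψ) x = openFam 0 0 0 0 (d / 2) ψ x ∧
    pd 2 (openFam a b c k d ψ) x = openFam 0 a 0 c d (deriv ψ) x := by
  have h0 := hasFDerivAt_coord 0 x
  have h1 := hasFDerivAt_coord 1 x
  have h2 := hasFDerivAt_coord 2 x
  have hp : HasFDerivAt (fun y : Pt 3 => ψ (y 2)) _ x :=
    hψ.differentiableAt.hasDerivAt.comp_hasFDerivAt x h2
  have he : HasFDerivAt (fun y : Pt 3 => Complex.exp (y 1 / 2)) _ x := (h1.mul_const (2⁻¹ : ℂ)).cexp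
  have h := (((((h0.mul h2).const_mul a).add (h0.const_mul b)).add
    (h2.const_mul c)).add_const k).add ((he.mul hp).const_mul d)
  have h' : HasFDerivAt (openFam a b c k d ψ) _ x := h
  refine ⟨?_, ?_, ?_⟩ <;> simp only [pd, h'.fderiv] <;> simp [openFam, div_eq_mul_inv] <;> ring

/-- The second partial derivatives of a member of `openFam`, reduced to first ones of other members.
The formulas for the inner derivative hold only on the open set `ℂ² × U`, which suffices by
`pd_congr`. -/
lemma hess_openFam (a b c k d : ℂ) {ψ : ℂ → ℂ} {x : Pt 3} {U : Set ℂ} (hU : IsOpen U)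
    (hψ : AnalyticOnNhd ℂ ψ U) (hx : x 2 ∈ U) (i : Fin 3) :
    pd i (pd 0 (openFam a b c k d ψ)) x = pd i (openFam 0 0 a b 0 ψ) x ∧
    pd i (pd 1 (openFam a b c k d ψ)) x = pd i (openFam 0 0 0 0 (d / 2) ψ) x ∧
    pd i (pd 2 (openFam a b c k d ψ)) x = pd i (openFam 0 a 0 c d (deriv ψ)) x := by
  have hnear : ∀ᶠ y : Pt 3 in nhds x, y 2 ∈ U :=
    (hU.preimage (continuous_apply (2 : Fin 3))).mem_nhds hx
  exact ⟨pd_congr i (hnear.mono fun y hy => (pd_openFam a b c k d (hψ _ hy)).1),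
    pd_congr i (hnear.mono fun y hy => (pd_openFam a b c k d (hψ _ hy)).2.1),
    pd_congr i (hnear.mono fun y hy => (pd_openFam a b c k d (hψ _ hy)).2.2)⟩

theorem stmt18
    (η : Matrix (Fin 2) (Fin 2) ℂ) (hη : η = !![0, 1; 1, 0])
    (F : Fn 2) (hF : F = fun x => (1/2) * x 0 ^ 2 * x 1 + Complex.exp (x 1))
    (U : Set ℂ) (hU : IsOpen U)
    (φ : ℂ → ℂ) (hφan : AnalyticOnNhd ℂ φ U)
    (Fo : Fn 3) (hFo : Fo = fun x => x 0 * x 2 + Complex.exp (x 1 / 2) * φ (x 2))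
    (MU : Set (Pt 3)) (hMU : MU = {x | x 2 ∈ U}) :
    -- F^o satisfies the open WDVV equations with respect to F and η on ℂ²×U
    ((∀ x ∈ MU, ∀ α β γ : Fin 2,
        ∑ μ, ∑ ν, pd μ (pd β (pd α F)) (prj x) * η⁻¹ μ ν *
            pd γ.castSucc (pd ν.castSucc Fo) x
          + pd β.castSucc (pd α.castSucc Fo) x * pd γ.castSucc (pd (Fin.last 2) Fo) x =
        ∑ μ, ∑ ν, pd μ (pd β (pd γ F)) (prj x) * η⁻¹ μ ν *
            pd α.castSucc (pd ν.castSucc Fo) x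
          + pd β.castSucc (pd γ.castSucc Fo) x * pd α.castSucc (pd (Fin.last 2) Fo) x) ∧
     (∀ x ∈ MU, ∀ α β : Fin 2,
        ∑ μ, ∑ ν, pd μ (pd β (pd α F)) (prj x) * η⁻¹ μ ν *
            pd (Fin.last 2) (pd ν.castSucc Fo) x
          + pd β.castSucc (pd α.castSucc Fo) x * pd (Fin.last 2) (pd (Fin.last 2) Fo) x =
        pd β.castSucc (pd (Fin.last 2) Fo) x * pd α.castSucc (pd (Fin.last 2) Fo) x))
    ↔
    -- the ODE (φ')² − φ·φ'' = 4 on U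
    (∀ s ∈ U, (deriv φ s) ^ 2 - φ s * deriv (deriv φ) s = 4) := by
  have hF' : F = closedFam (1/2) 0 0 0 0 0 1 := by
    rw [hF]; funext x; simp only [closedFam]; ring
  have hFo' : Fo = openFam 1 0 0 0 1 φ := by
    rw [hFo]; funext x; simp only [openFam]; ring
  have hinv : η⁻¹ = !![0, 1; 1, 0] := by
    rw [hη]; exact Matrix.inv_eq_left_inv (by simp [Matrix.one_fin_two])
  have c0 : (0 : Fin 2).castSucc = (0 : Fin 3) := rfl
  have c1 : (1 : Fin 2).castSucc = (1 : Fin 3) := rfl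
  have c2 : Fin.last 2 = (2 : Fin 3) := rfl
  -- makes `e^{t₂}` from `F` comparable with the squares of `e^{t₂/2}` coming from `F^o`
  have hexp : ∀ z : ℂ, Complex.exp z = Complex.exp (z / 2) ^ 2 := fun z => by
    rw [← Complex.exp_nat_mul]; congr 1; push_cast; ring
  subst hMU
  have hs : ∀ x : Pt 3, x 2 ∈ U → ∀ i : Fin 3, _ := fun x hx i =>
    hess_openFam 1 0 0 0 1 hU hφan hx i
  constructor
  · rintro ⟨-, h⟩ s hsU
    -- the point `(0, 0, s)`, where all exponential factors equal `1`
    have hx : (![0, 0, s] : Pt 3) 2 ∈ U := hsU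
    have e := h ![0, 0, s] hx 1 1
    have hφ := hφan _ hx
    simp only [Fin.sum_univ_two, c0, c1, c2, hF', hFo', hinv, (hs _ hx _).1, (hs _ hx _).2.1,
      (hs _ hx _).2.2, (pd_openFam _ _ _ _ _ hφ).1, (pd_openFam _ _ _ _ _ hφ).2.1,
      (pd_openFam _ _ _ _ _ hφ).2.2, (pd_openFam _ _ _ _ _ hφ.deriv).1,
      (pd_openFam _ _ _ _ _ hφ.deriv).2.1, (pd_openFam _ _ _ _ _ hφ.deriv).2.2,
      pd_zero_closedFam, pd_one_closedFam] at e
    simp [closedFam, openFam, prj] at e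
    linear_combination -4 * e
  · intro h
    refine ⟨fun x hx α β γ => ?_, fun x hx α β => ?_⟩
    all_goals
      replace hx : x 2 ∈ U := hx
      have hφ := hφan _ hx
      have e := h _ hx
      fin_cases α <;> fin_cases β <;> try fin_cases γ
    all_goals
      simp only [Fin.sum_univ_two, Fin.zero_eta, Fin.mk_one, c0, c1, c2, hF', hFo', hinv,
        (hs _ hx _).1, (hs _ hx _).2.1,
        (hs _ hx _).2.2, (pd_openFam _ _ _ _ _ hφ).1, (pd_openFam _ _ _ _ _ hφ).2.1,
        (pd_openFam _ _ _ _ _ hφ).2.2, (pd_openFam _ _ _ _ _ hφ.deriv).1,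
        (pd_openFam _ _ _ _ _ hφ.deriv).2.1, (pd_openFam _ _ _ _ _ hφ.deriv).2.2,
        pd_zero_closedFam, pd_one_closedFam]
      try simp [closedFam, openFam, prj, hexp (x 1)]
    -- only the second equation with `α = β = 2` is not an identity
    linear_combination (-(Complex.exp (x 1 / 2) ^ 2) / 4) * e

end
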